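/- arXiv:2501.11989 — 2 statements merged into one kernel-verified Lean document; each statement's English description precedes it below -/
import Mathlib

section
/- Let $s \in (0,1)$, $p \in (1, n/s]$, and let $u_0$ be defined by $u_0(x) = |x|^{(sp-n)/(p-1)}$ if $sp < n$ and $u_0(x) = \ln(1/|x|)$ if $sp = n$. Then $\int_{\mathbb{R}^n}\int_{\mathbb{R}^n} \frac{|u_0(x)-u_0(y)|^{p-1}}{|x-y|^{n+sp}}\, \big| |x - {\bf e}_1|^{s-n} - |y - {\bf e}_1|^{s-n} \big| \, dy\, dx < \infty$. -/
open MeasureTheory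

noncomputable section

def kk (N η r : ℝ) : ℝ := min (r ^ (-N + η)) (r ^ (-N - η))

lemma log_ineq {a b θ : ℝ} (ha : 0 < a) (hab : a ≤ b) (h0 : 0 < θ) (h1 : θ ≤ 1) :
    Real.log b - Real.log a ≤ (1 / θ) * ((b - a) / a) ^ θ := by
  have hb : 0 < b := ha.trans_le hab
  have hz : 0 ≤ (b - a) / a := div_nonneg (by linarith) ha.le
  have e : Real.log b - Real.log a = Real.log (1 + (b - a) / a) := by
    rw [← Real.log_div hb.ne' ha.ne']; congr 1; field_simp; ring
  have h2 : (1 + (b - a) / a) ^ θ ≤ 1 + ((b - a) / a) ^ θ := by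
    have := Real.rpow_add_le_add_rpow zero_le_one hz h0.le h1
    simpa using this
  have h3 : θ * Real.log (1 + (b - a) / a) ≤ ((b - a) / a) ^ θ := by
    rw [← Real.log_rpow (by linarith)]
    have := Real.log_le_sub_one_of_pos (x := (1 + (b - a) / a) ^ θ) (Real.rpow_pos_of_pos (by linarith) _)
    linarith
  rw [e, one_div, inv_mul_eq_div, le_div_iff₀ h0]; linarith

lemma pow_ineq {a b γ : ℝ} (ha : 0 < a) (hab : a ≤ b) (_hγ : 0 ≤ γ) :
    a ^ (-γ) - b ^ (-γ) ≤ γ * (Real.log b - Real.log a) * a ^ (-γ) := by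
  have hb : 0 < b := ha.trans_le hab
  have e : b ^ (-γ) = a ^ (-γ) * Real.exp (-(γ * (Real.log b - Real.log a))) := by
    rw [Real.rpow_def_of_pos ha, Real.rpow_def_of_pos hb, ← Real.exp_add]; congr 1; ring
  have h1 := Real.add_one_le_exp (-(γ * (Real.log b - Real.log a)))
  have h2 := Real.rpow_pos_of_pos ha (-γ)
  rw [e]; nlinarith

lemma log_hol {a b d θ : ℝ} (ha : 0 < a) (hb : 0 < b) (hd : |a - b| ≤ d) (h0 : 0 < θ)
    (h1 : θ ≤ 1) :
    |Real.log a - Real.log b| ≤ (1 / θ) * d ^ θ * (min a b) ^ (-θ) := by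
  wlog hab : a ≤ b generalizing a b
  · have := this hb ha (by rwa [abs_sub_comm]) (by linarith)
    rwa [abs_sub_comm, min_comm] at this
  rw [min_eq_left hab, abs_sub_comm, abs_of_nonneg (by linarith [Real.log_le_log ha hab])]
  refine (log_ineq ha hab h0 h1).trans ?_
  have hd' : b - a ≤ d := by rw [abs_sub_comm] at hd; exact (le_abs_self _).trans hd
  rw [Real.div_rpow (by linarith) ha.le, Real.rpow_neg ha.le, mul_assoc, div_eq_mul_inv ((b-a)^θ)]
  have := Real.rpow_le_rpow (by linarith) hd' h0.le
  gcongr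

lemma pow_hol {a b d θ γ : ℝ} (ha : 0 < a) (hb : 0 < b) (hd : |a - b| ≤ d) (h0 : 0 < θ)
    (h1 : θ ≤ 1) (hγ : 0 ≤ γ) :
    |a ^ (-γ) - b ^ (-γ)| ≤ (γ / θ) * d ^ θ * (min a b) ^ (-γ - θ) := by
  wlog hab : a ≤ b generalizing a b
  · have := this hb ha (by rwa [abs_sub_comm]) (by linarith)
    rwa [abs_sub_comm, min_comm] at this
  have hl := log_hol ha hb hd h0 h1
  rw [abs_sub_comm, abs_of_nonneg (by linarith [Real.log_le_log ha hab])] at hl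
  rw [min_eq_left hab] at *
  rw [abs_of_nonneg (by linarith [Real.rpow_le_rpow_of_nonpos ha hab (neg_nonpos.2 hγ)])]
  refine (pow_ineq ha hab hγ).trans ?_
  rw [sub_eq_add_neg (-γ), Real.rpow_add ha]
  have h2 := Real.rpow_pos_of_pos ha (-γ)
  calc γ * (Real.log b - Real.log a) * a ^ (-γ)
      ≤ γ * ((1 / θ) * d ^ θ * a ^ (-θ)) * a ^ (-γ) := by gcongr
    _ = _ := by ring

lemma kk_nonneg {N η r : ℝ} (hr : 0 ≤ r) : 0 ≤ kk N η r := by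
  unfold kk; positivity

/-- below one -/
lemma le_kk_small {N η r A : ℝ} (hη : 0 ≤ η) (hr : 0 < r) (h1 : r ≤ 1) (hA : A ≤ N - η) :
    r ^ (-A) ≤ kk N η r := by
  unfold kk
  exact le_min (Real.rpow_le_rpow_of_exponent_ge hr h1 (by linarith))
    (Real.rpow_le_rpow_of_exponent_ge hr h1 (by linarith))

lemma le_kk_large {N η r A : ℝ} (hη : 0 ≤ η) (h1 : 1 ≤ r) (hA : N + η ≤ A) :
    r ^ (-A) ≤ kk N η r := by
  unfold kk
  exact le_min (Real.rpow_le_rpow_of_exponent_le h1 (by linarith))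
    (Real.rpow_le_rpow_of_exponent_le h1 (by linarith))

lemma rpow_quarter {r A : ℝ} (hr : 1 / 4 ≤ r) (hA : 0 ≤ A) : r ^ (-A) ≤ 4 ^ A := by
  have := Real.rpow_le_rpow_of_nonpos (by norm_num) hr (neg_nonpos.2 hA)
  refine this.trans (le_of_eq ?_)
  rw [one_div, Real.inv_rpow (by norm_num), Real.rpow_neg (by norm_num), inv_inv]

lemma one_le_kk {N η r : ℝ} (hη : 0 ≤ η) (hN : η ≤ N) (hr : 0 < r) (h1 : r ≤ 1) :
    1 ≤ kk N η r := by
  have := le_kk_small (N := N) (A := 0) hη hr h1 (by linarith)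
  simpa using this

lemma le_kk_far {N η r A : ℝ} (hη : 0 ≤ η) (hN : η ≤ N) (h1 : 1 / 4 ≤ r) (hA : N + η ≤ A) :
    r ^ (-A) ≤ 4 ^ A * kk N η r := by
  have h4 : (1 : ℝ) ≤ 4 ^ A := Real.one_le_rpow (by norm_num) (by linarith)
  have hk := kk_nonneg (N := N) (η := η) (r := r) (by linarith)
  rcases le_total r 1 with h | h
  · have := one_le_kk hη hN (by linarith) h
    have := rpow_quarter (A := A) h1 (by linarith)
    nlinarith
  · have := le_kk_large hη h hA
    nlinarith

lemma lemP {N η m m' A B : ℝ} (hη : 0 ≤ η) (hN : η ≤ N) (hm : 1 / 4 ≤ m) (hm' : 0 < m')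
    (hA : 0 ≤ A) (hB : 0 ≤ B) (hBN : B ≤ N - η) (hAB : N + η ≤ A + B) :
    m ^ (-A) * m' ^ (-B) ≤ 4 ^ A * (kk N η m + kk N η m') := by
  have h4 : (1 : ℝ) ≤ 4 ^ A := Real.one_le_rpow (by norm_num) (by linarith)
  have hm0 : 0 < m := by linarith
  have hk := kk_nonneg (N := N) (η := η) hm0.le
  have hk' := kk_nonneg (N := N) (η := η) hm'.le
  have hq := rpow_quarter (A := A) hm hA
  have p1 := Real.rpow_pos_of_pos hm0 (-A)
  have p2 := Real.rpow_pos_of_pos hm' (-B)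
  rcases le_total m' 1 with h | h
  · have := le_kk_small hη hm' h hBN
    calc m ^ (-A) * m' ^ (-B) ≤ 4 ^ A * kk N η m' := by gcongr
      _ ≤ _ := by gcongr; linarith
  have hb1 : m' ^ (-B) ≤ 1 := Real.rpow_le_one_of_one_le_of_nonpos h (by linarith)
  rcases le_total m 1 with g | g
  · have := one_le_kk hη hN hm0 g
    calc m ^ (-A) * m' ^ (-B) ≤ 4 ^ A * 1 := by gcongr
      _ ≤ _ := by gcongr; linarith
  have key : m ^ (-A) * m' ^ (-B) ≤ kk N η m + kk N η m' := by
    rcases le_total m m' with l | l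
    · have e1 := le_kk_large hη g hAB
      have : m' ^ (-B) ≤ m ^ (-B) := Real.rpow_le_rpow_of_nonpos hm0 l (by linarith)
      rw [neg_add, Real.rpow_add hm0] at e1
      nlinarith
    · have e1 := le_kk_large hη h hAB
      have : m ^ (-A) ≤ m' ^ (-A) := Real.rpow_le_rpow_of_nonpos hm' l (by linarith)
      rw [neg_add, Real.rpow_add hm'] at e1
      nlinarith
  nlinarith

/-- the core bound for one choice of the exponents -/
lemma core {N s p β M M' d m m' F G θ τ : ℝ} (hp : 1 < p) (hβ : β * (p - 1) = N - s * p)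
    (hd : 0 < d) (hm : 0 < m) (hm' : 0 < m') (hM : 0 ≤ M) (hF0 : 0 ≤ F)
    (hG0 : 0 ≤ G) (hM' : 0 ≤ M') (hθ : 0 < θ) (hτ : 0 < τ)
    (hF : F ≤ (M / θ) * d ^ θ * m ^ (-β - θ))
    (hG : G ≤ (M' / τ) * d ^ τ * m' ^ (-(N - s) - τ)) :
    F ^ (p - 1) / d ^ (N + s * p) * G ≤ ((M / θ) ^ (p - 1) * (M' / τ)) *
      (d ^ (-(N + s * p - (p - 1) * θ - τ)) *
        (m ^ (-(N - s * p + (p - 1) * θ)) * m' ^ (-(N - s + τ)))) := by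
  have h1 : F ^ (p - 1) ≤ (M / θ) ^ (p - 1) * d ^ ((p - 1) * θ) *
      m ^ (-(N - s * p + (p - 1) * θ)) := by
    refine (Real.rpow_le_rpow hF0 hF (by linarith)).trans (le_of_eq ?_)
    rw [Real.mul_rpow (by positivity) (by positivity), Real.mul_rpow (by positivity) (by positivity),
      ← Real.rpow_mul hd.le, ← Real.rpow_mul hm.le, ← hβ]
    congr 2
    · congr 1; ring
    · ring
  calc F ^ (p - 1) / d ^ (N + s * p) * G
      ≤ ((M / θ) ^ (p - 1) * d ^ ((p - 1) * θ) * m ^ (-(N - s * p + (p - 1) * θ))) /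
          d ^ (N + s * p) * ((M' / τ) * d ^ τ * m' ^ (-(N - s) - τ)) := by
        have : 0 ≤ F ^ (p - 1) := Real.rpow_nonneg hF0 _
        gcongr
    _ = _ := by
      have e : d ^ (-(N + s * p - (p - 1) * θ - τ)) =
          d ^ ((p - 1) * θ) * d ^ τ * (d ^ (N + s * p))⁻¹ := by
        rw [← Real.rpow_neg hd.le, ← Real.rpow_add hd, ← Real.rpow_add hd]; congr 1; ring
      rw [e, show -(N - s) - τ = -(N - s + τ) by ring]
      ring

set_option maxHeartbeats 1000000 in
lemma key {N s p ε M M' : ℝ} (hN : 1 ≤ N) (hs0 : 0 < s) (hs1 : s < 1) (hp : 1 < p)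
    (hspn : s * p ≤ N) (hε : 0 < ε) (hεs : ε < s) (h2 : (p + 1) * ε ≤ 1 - s)
    (h3 : 2 * ε ≤ (p - 1) * (1 - s)) (hM : 0 ≤ M) (hM' : 0 ≤ M') :
    ∃ C : ℝ, 0 ≤ C ∧ ∀ a a' b b' d F G : ℝ, 0 < a → 0 < a' → 0 < b → 0 < b' → 0 < d →
      |a - a'| ≤ d → |b - b'| ≤ d → 1 ≤ a + b → 1 ≤ a' + b' → 0 ≤ F → 0 ≤ G →
      (∀ θ, 0 < θ → θ ≤ 1 →
        F ≤ (M / θ) * d ^ θ * (min a a') ^ (-((N - s * p) / (p - 1)) - θ)) →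
      (∀ τ, 0 < τ → τ ≤ 1 → G ≤ (M' / τ) * d ^ τ * (min b b') ^ (-(N - s) - τ)) →
      F ^ (p - 1) / d ^ (N + s * p) * G ≤
        C * ((kk N ε a + kk N ε b + (kk N ε a' + kk N ε b')) * kk N ε d +
          (kk N ε a + kk N ε b) * (kk N ε a' + kk N ε b')) := by
  have hβ : (N - s * p) / (p - 1) * (p - 1) = N - s * p := by
    field_simp [show p - 1 ≠ 0 by linarith]
  have hpe : 0 < p * ε := by positivity
  have hεN : ε ≤ N := by linarith
  have hpse : 0 < (p - 1) * (s - ε) := mul_pos (by linarith) (by linarith)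
  have hps : 0 < (p - 1) * s := mul_pos (by linarith) (by linarith)
  have hpe1 : 0 < (p - 1) * ε := mul_pos (by linarith) (by linarith)
  obtain ⟨c, hc⟩ : ∃ c : ℝ → ℝ → ℝ, ∀ θ τ, c θ τ = (M / θ) ^ (p - 1) * (M' / τ) :=
    ⟨_, fun _ _ => rfl⟩
  have hcn : ∀ θ τ, 0 < θ → 0 < τ → 0 ≤ c θ τ := fun θ τ h h' => by
    rw [hc]; positivity
  set C1 := c 1 (s - ε) * 4 ^ (N - s * p + (p - 1) * 1) with hC1
  set C2 := c s 1 * 4 ^ (N - s + 1) with hC2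
  set t := s - ε with ht
  have ht0 : 0 < t := by linarith
  set D := N + s * p - (p - 1) * t - t with hD
  set A := N - s * p + (p - 1) * t with hA
  set B := N - s + t with hB
  set C3 := c t t * (4 ^ D * 4 ^ A) with hC3
  set C4 := c t t * (4 ^ D * 4 ^ B) with hC4
  set C5 := c t t * 4 ^ D with hC5
  have q1 : 0 ≤ C1 := mul_nonneg (hcn _ _ one_pos ht0) (by positivity)
  have q2 : 0 ≤ C2 := mul_nonneg (hcn _ _ hs0 one_pos) (by positivity)
  have q3 : 0 ≤ C3 := mul_nonneg (hcn _ _ ht0 ht0) (by positivity)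
  have q4 : 0 ≤ C4 := mul_nonneg (hcn _ _ ht0 ht0) (by positivity)
  have q5 : 0 ≤ C5 := mul_nonneg (hcn _ _ ht0 ht0) (by positivity)
  have hDN : N + ε ≤ D := by rw [hD, ht]; linarith
  have hAN : A ≤ N - ε := by linarith
  have hBN : B ≤ N - ε := by rw [hB, ht]; linarith
  have hABN : N + ε ≤ A + B := by rw [hA, hB, ht]; linarith
  have hB0 : 0 ≤ B := by rw [hB]; linarith
  have hA0 : 0 ≤ A := by rw [hA]; linarith
  refine ⟨C1 + C2 + C3 + C4 + C5, by positivity, ?_⟩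
  intro a a' b b' d F G ha ha' hb hb' hd haa hbb hab hab' hF0 hG0 hF hG
  have n1 := kk_nonneg (N := N) (η := ε) ha.le
  have n2 := kk_nonneg (N := N) (η := ε) ha'.le
  have n3 := kk_nonneg (N := N) (η := ε) hb.le
  have n4 := kk_nonneg (N := N) (η := ε) hb'.le
  have n5 := kk_nonneg (N := N) (η := ε) hd.le
  set Z := (kk N ε a + kk N ε b + (kk N ε a' + kk N ε b')) * kk N ε d +
          (kk N ε a + kk N ε b) * (kk N ε a' + kk N ε b') with hZ
  have hZ0 : 0 ≤ Z := by positivity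
  have hm : 0 < min a a' := lt_min ha ha'
  have hm' : 0 < min b b' := lt_min hb hb'
  have hS : (kk N ε (min a a') + kk N ε (min b b')) * kk N ε d ≤ Z := by
    have : kk N ε (min a a') + kk N ε (min b b') ≤
        kk N ε a + kk N ε b + (kk N ε a' + kk N ε b') := by
      rcases min_choice a a' with h | h <;> rcases min_choice b b' with h' | h' <;>
        rw [h, h'] <;> linarith
    have := mul_le_mul_of_nonneg_right this n5
    have : 0 ≤ (kk N ε a + kk N ε b) * (kk N ε a' + kk N ε b') := by positivity
    linarith
  suffices h : ∃ C' ∈ ({C1, C2, C3, C4, C5} : Set ℝ),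
      F ^ (p - 1) / d ^ (N + s * p) * G ≤ C' * Z by
    obtain ⟨C', hC', h⟩ := h
    refine h.trans (mul_le_mul_of_nonneg_right ?_ hZ0)
    simp only [Set.mem_insert_iff, Set.mem_singleton_iff] at hC'
    rcases hC' with h | h | h | h | h <;> rw [h] <;> linarith
  have hcore : ∀ θ τ, 0 < θ → θ ≤ 1 → 0 < τ → τ ≤ 1 →
      F ^ (p - 1) / d ^ (N + s * p) * G ≤ c θ τ *
      (d ^ (-(N + s * p - (p - 1) * θ - τ)) *
        ((min a a') ^ (-(N - s * p + (p - 1) * θ)) * (min b b') ^ (-(N - s + τ)))) :=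
    fun θ τ h1 h2 h3 h4 => by
      rw [hc]
      exact core hp hβ hd hm hm' hM hF0 hG0 hM' h1 h3 (hF θ h1 h2) (hG τ h3 h4)
  set m := min a a' with hmdef
  set m' := min b b' with hmdef'
  have fin : ∀ θ τ K Q X Y : ℝ, 0 < θ → θ ≤ 1 → 0 < τ → τ ≤ 1 → 0 ≤ K → 0 ≤ X → 0 ≤ Y →
      d ^ (-(N + s * p - (p - 1) * θ - τ)) ≤ K * X →
      m ^ (-(N - s * p + (p - 1) * θ)) * m' ^ (-(N - s + τ)) ≤ Q * Y → Y * X ≤ Z → 0 ≤ Q → 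
      F ^ (p - 1) / d ^ (N + s * p) * G ≤ c θ τ * (K * Q) * Z := by
    intro θ τ K Q X Y h1 h2 h3 h4 hK hX hY e1 e2 e3 hQ
    refine (hcore θ τ h1 h2 h3 h4).trans ?_
    have := hcn θ τ h1 h3
    rw [mul_assoc (c θ τ) (K * Q) Z]
    refine mul_le_mul_of_nonneg_left ?_ this
    calc _ ≤ (K * X) * (Q * Y) := mul_le_mul e1 e2 (by positivity) (by positivity)
      _ = K * Q * (Y * X) := by ring
      _ ≤ _ := mul_le_mul_of_nonneg_left e3 (by positivity)
  have hkm := kk_nonneg (N := N) (η := ε) hm.le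
  have hkm' := kk_nonneg (N := N) (η := ε) hm'.le
  rcases le_total d (1 / 4) with hd4 | hd4
  · have : 1 / 4 ≤ m ∨ 1 / 4 ≤ m' := by
      by_contra! hcon
      obtain ⟨l1, l2⟩ := hcon
      rw [abs_le] at haa hbb
      rw [hmdef, min_lt_iff] at l1
      rw [hmdef', min_lt_iff] at l2
      rcases l1 with l1 | l1 <;> rcases l2 with l2 | l2 <;> linarith
    rcases this with h | h
    · refine ⟨C1, by simp, ?_⟩
      have := fin 1 t 1 (4 ^ (N - s * p + (p - 1) * 1)) (kk N ε d) (kk N ε m + kk N ε m')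
        one_pos le_rfl ht0 (by linarith) zero_le_one n5 (by positivity)
        (by rw [one_mul]; exact le_kk_small hε.le hd (by linarith) (by linarith))
        (lemP hε.le hεN h hm' (by linarith) hB0 hBN (by linarith)) hS (by positivity)
      rwa [one_mul] at this
    · refine ⟨C2, by simp, ?_⟩
      have := fin s 1 1 (4 ^ (N - s + 1)) (kk N ε d) (kk N ε m + kk N ε m')
        hs0 hs1.le one_pos le_rfl zero_le_one n5 (by positivity)
        (by rw [one_mul]; exact le_kk_small hε.le hd (by linarith) (by linarith))
        (by
          rw [mul_comm, add_comm (kk N ε m)]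
          exact lemP hε.le hεN h hm (by linarith) (by linarith) (by linarith) (by linarith))
        hS (by positivity)
      rwa [one_mul] at this
  have hdD : d ^ (-D) ≤ 4 ^ D * kk N ε d := le_kk_far hε.le hεN hd4 hDN
  by_cases h : 1 / 4 ≤ m
  · exact ⟨C3, by simp, fin t t _ _ (kk N ε d) (kk N ε m + kk N ε m') ht0 (by linarith) ht0
      (by linarith) (by positivity) n5 (by positivity) hdD
      (lemP hε.le hεN h hm' hA0 hB0 hBN hABN) hS (by positivity)⟩
  by_cases h' : 1 / 4 ≤ m'
  · exact ⟨C4, by simp, fin t t _ _ (kk N ε d) (kk N ε m + kk N ε m') ht0 (by linarith) ht0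
      (by linarith) (by positivity) n5 (by positivity) hdD
      (by
        rw [mul_comm, add_comm (kk N ε m)]
        exact lemP hε.le hεN h' hm hB0 hA0 hAN (by linarith)) hS (by positivity)⟩
  push Not at h h'
  refine ⟨C5, by simp, ?_⟩
  have hmix : kk N ε m * kk N ε m' ≤ Z := by
    have pos : 0 ≤ (kk N ε a + kk N ε b + (kk N ε a' + kk N ε b')) * kk N ε d := by positivity
    have : kk N ε m * kk N ε m' ≤ (kk N ε a + kk N ε b) * (kk N ε a' + kk N ε b') := by
      have w1 := mul_nonneg n1 n2
      have w2 := mul_nonneg n1 n4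
      have w3 := mul_nonneg n3 n2
      have w4 := mul_nonneg n3 n4
      rcases min_choice a a' with g | g <;> rcases min_choice b b' with g' | g' <;>
        rw [← hmdef] at g <;> rw [← hmdef'] at g' <;> rw [g] at h <;> rw [g'] at h' <;>
        rw [g, g'] <;>
        first
        | (exfalso; linarith only [h, h', hab, hab'])
        | linarith only [w1, w2, w3, w4]
    linarith
  have := fin t t (4 ^ D) 1 1 (kk N ε m * kk N ε m') ht0 (by linarith) ht0
      (by linarith) (by positivity) zero_le_one (by positivity)
      (by rw [mul_one]; exact rpow_quarter hd4 (by linarith))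
      (by
        rw [one_mul]
        exact mul_le_mul (le_kk_small hε.le hm (by linarith) hAN)
          (le_kk_small hε.le hm' (by linarith) hBN) (by positivity) hkm)
      (by rw [mul_one]; exact hmix) zero_le_one
  rwa [mul_one] at this

lemma kk_meas (N η : ℝ) : Measurable (kk N η) := by
  unfold kk; fun_prop

lemma kk_integrable (n : ℕ) (hn : 0 < n) {ε : ℝ} (hε : 0 < ε) :
    Integrable (fun x : EuclideanSpace ℝ (Fin n) => kk n ε ‖x‖) := by
  haveI : Nonempty (Fin n) := ⟨⟨0, hn⟩⟩
  rw [integrable_fun_norm_addHaar volume (f := kk n ε)]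
  rw [← Set.Ioc_union_Ioi_eq_Ioi (zero_le_one (α := ℝ))]
  simp only [finrank_euclideanSpace, Fintype.card_fin, smul_eq_mul]
  have e : ∀ (x : ℝ) (A : ℝ), 0 < x → x ^ (n - 1) * x ^ A = x ^ ((n : ℝ) - 1 + A) := by
    intro x A hx
    rw [Real.rpow_add hx, ← Nat.cast_pred hn, Real.rpow_natCast]
  have hm : Measurable (fun y : ℝ => y ^ (n - 1) * kk n ε y) :=
    (measurable_id.pow_const _).mul (kk_meas _ _)
  refine IntegrableOn.union ?_ ?_
  · have h := (intervalIntegral.intervalIntegrable_rpow' (a := 0) (b := 1) (r := -1 + ε)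
      (by linarith)).1
    refine Integrable.mono' h hm.aestronglyMeasurable ?_
    filter_upwards [ae_restrict_mem measurableSet_Ioc] with x hx
    have hk := kk_nonneg (N := n) (η := ε) hx.1.le
    have hx0 := hx.1
    rw [Real.norm_of_nonneg (by positivity), show -1 + ε = (n : ℝ) - 1 + (-n + ε) by ring, ← e x _ hx0]
    gcongr
    exact min_le_left _ _
  · have h := integrableOn_Ioi_rpow_of_lt (a := -1 - ε) (c := 1) (by linarith) one_pos
    refine Integrable.mono' h hm.aestronglyMeasurable ?_
    filter_upwards [ae_restrict_mem measurableSet_Ioi] with x hx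
    have hx0 : 0 < x := zero_lt_one.trans hx
    have hk := kk_nonneg (N := n) (η := ε) hx0.le
    rw [Real.norm_of_nonneg (by positivity), show -1 - ε = (n : ℝ) - 1 + (-n - ε) by ring, ← e x _ hx0]
    gcongr
    exact min_le_right _ _

lemma double_fin {E : Type*} [NormedAddCommGroup E] [MeasurableSpace E] [BorelSpace E]
    [SecondCountableTopology E] (μ : Measure E) [SFinite μ] [μ.IsAddHaarMeasure]
    (W K : E → ENNReal) (hW : Measurable W) (hK : Measurable K) (hKs : ∀ x, K (-x) = K x)
    (hWf : ∫⁻ x, W x ∂μ < ⊤) (hKf : ∫⁻ x, K x ∂μ < ⊤) :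
    ∫⁻ x, ∫⁻ y, ((W x + W y) * K (x - y) + W x * W y) ∂μ ∂μ < ⊤ := by
  have i1 : ∀ x, ∫⁻ y, K (x - y) ∂μ = ∫⁻ y, K y ∂μ := fun x => by
    rw [← lintegral_sub_right_eq_self K x]
    refine lintegral_congr fun y => ?_
    rw [← hKs, neg_sub]
  have i2 : ∀ y, ∫⁻ x, K (x - y) ∂μ = ∫⁻ x, K x ∂μ := fun y => lintegral_sub_right_eq_self K y
  have m1 : Measurable fun q : E × E => W q.2 * K (q.1 - q.2) := by fun_prop
  have e : ∀ x, ∫⁻ y, ((W x + W y) * K (x - y) + W x * W y) ∂μ =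
      W x * ∫⁻ y, K y ∂μ + ∫⁻ y, W y * K (x - y) ∂μ + W x * ∫⁻ y, W y ∂μ := by
    intro x
    simp only [add_mul]
    rw [lintegral_add_right _ (by fun_prop), lintegral_add_right _ (by fun_prop),
      lintegral_const_mul _ (by fun_prop), lintegral_const_mul _ (by fun_prop), i1]
  simp only [e]
  rw [lintegral_add_right _ (by fun_prop), lintegral_add_left (by fun_prop),
    lintegral_mul_const _ hW, lintegral_mul_const _ hW, lintegral_lintegral_swap m1.aemeasurable]
  have : ∀ y, ∫⁻ x, W y * K (x - y) ∂μ = W y * ∫⁻ x, K x ∂μ := fun y => by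
    rw [lintegral_const_mul _ (by fun_prop), i2]
  simp only [this]
  rw [lintegral_mul_const _ hW]
  have a1 := ENNReal.mul_lt_top hWf hKf
  have a2 := ENNReal.mul_lt_top hWf hWf
  exact ENNReal.add_lt_top.2 ⟨ENNReal.add_lt_top.2 ⟨a1, a1⟩, a2⟩

theorem stmt_11 (n : ℕ) (hn : 0 < n) (s p : ℝ) (hs : s ∈ Set.Ioo (0 : ℝ) 1)
    (hp : 1 < p) (hspn : s * p ≤ n)
    (u₀ : EuclideanSpace ℝ (Fin n) → ℝ)
    (hu₀ : ∀ x, u₀ x =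
      if s * p < n then ‖x‖ ^ ((s * p - n) / (p - 1)) else Real.log (1 / ‖x‖)) :
    (∫⁻ x : EuclideanSpace ℝ (Fin n), ∫⁻ y : EuclideanSpace ℝ (Fin n),
      ENNReal.ofReal
        (|u₀ x - u₀ y| ^ (p - 1) / ‖x - y‖ ^ ((n : ℝ) + s * p) *
          |‖x - EuclideanSpace.single (⟨0, hn⟩ : Fin n) (1 : ℝ)‖ ^ (s - (n : ℝ)) -
            ‖y - EuclideanSpace.single (⟨0, hn⟩ : Fin n) (1 : ℝ)‖ ^ (s - (n : ℝ))|)) < ⊤ := by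
  haveI : Nonempty (Fin n) := ⟨⟨0, hn⟩⟩
  obtain ⟨hs0, hs1⟩ := hs
  have hN : (1 : ℝ) ≤ n := by exact_mod_cast hn
  obtain ⟨ε, hε, hεs, h2, h3⟩ : ∃ ε : ℝ, 0 < ε ∧ ε < s ∧ (p + 1) * ε ≤ 1 - s ∧
      2 * ε ≤ (p - 1) * (1 - s) := by
    have g2 : 0 < (1 - s) / (p + 1) := div_pos (by linarith) (by linarith)
    have g3 : 0 < (p - 1) * (1 - s) := mul_pos (by linarith) (by linarith)
    refine ⟨min (s / 2) (min ((1 - s) / (p + 1)) ((p - 1) * (1 - s) / 2)), ?_, ?_, ?_, ?_⟩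
    · exact lt_min (by linarith) (lt_min g2 (by linarith))
    · exact (min_le_left _ _).trans_lt (by linarith)
    · rw [mul_comm, ← le_div_iff₀ (by linarith)]
      exact (min_le_right _ _).trans (min_le_left _ _)
    · have := (min_le_right (s / 2) _).trans
        (min_le_right ((1 - s) / (p + 1)) ((p - 1) * (1 - s) / 2))
      linarith
  set e : EuclideanSpace ℝ (Fin n) := EuclideanSpace.single (⟨0, hn⟩ : Fin n) (1 : ℝ) with he
  have hne : ‖e‖ = 1 := by simp [he]
  have hβ0 : 0 ≤ ((n : ℝ) - s * p) / (p - 1) := div_nonneg (by linarith) (by linarith)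
  obtain ⟨C, hC, H⟩ := key (M := max 1 (((n : ℝ) - s * p) / (p - 1))) (M' := n - s) hN hs0 hs1 hp
    hspn hε hεs h2 h3 (by positivity) (by linarith)
  have hu : ∀ x y : EuclideanSpace ℝ (Fin n), x ≠ 0 → y ≠ 0 → ∀ θ, 0 < θ → θ ≤ 1 →
      |u₀ x - u₀ y| ≤ (max 1 (((n : ℝ) - s * p) / (p - 1)) / θ) * ‖x - y‖ ^ θ *
        (min ‖x‖ ‖y‖) ^ (-(((n : ℝ) - s * p) / (p - 1)) - θ) := by
    intro x y hx hy θ h0 h1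
    have hx := norm_pos_iff.2 hx
    have hy := norm_pos_iff.2 hy
    rw [hu₀, hu₀]
    split_ifs with hlt
    · have := pow_hol hx hy (abs_norm_sub_norm_le x y) h0 h1 hβ0
      rw [show (s * p - n) / (p - 1) = -(((n : ℝ) - s * p) / (p - 1)) by ring]
      refine this.trans ?_
      gcongr
      exact le_max_right _ _
    · have h0' : (n : ℝ) - s * p = 0 := by linarith
      have := log_hol hx hy (abs_norm_sub_norm_le x y) h0 h1
      rw [h0', one_div, one_div, Real.log_inv, Real.log_inv, ← abs_neg]
      simp only [zero_div, neg_zero, zero_sub]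
      rw [max_eq_left zero_le_one]
      convert this using 2
      ring
  set W : EuclideanSpace ℝ (Fin n) → ℝ := fun x => kk n ε ‖x‖ + kk n ε ‖x - e‖ with hW
  set K : EuclideanSpace ℝ (Fin n) → ℝ := fun x => kk n ε ‖x‖ with hK
  have hKi : Integrable K := kk_integrable n hn hε
  have hWi : Integrable W := hKi.add (hKi.comp_sub_right e)
  have hK0 : ∀ x, 0 ≤ K x := fun x => kk_nonneg (norm_nonneg _)
  have hW0 : ∀ x, 0 ≤ W x := fun x => add_nonneg (hK0 x) (hK0 (x - e))
  have hKm : Measurable K := (kk_meas _ _).comp measurable_norm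
  have hWm : Measurable W := hKm.add (hKm.comp (measurable_sub_const e))
  have hbound : ∀ x y : EuclideanSpace ℝ (Fin n), x ≠ 0 → x ≠ e → y ≠ 0 → y ≠ e → y ≠ x →
      ENNReal.ofReal (|u₀ x - u₀ y| ^ (p - 1) / ‖x - y‖ ^ ((n : ℝ) + s * p) *
          |‖x - e‖ ^ (s - (n : ℝ)) - ‖y - e‖ ^ (s - (n : ℝ))|) ≤
      ENNReal.ofReal C * ((ENNReal.ofReal (W x) + ENNReal.ofReal (W y)) *
        ENNReal.ofReal (K (x - y)) + ENNReal.ofReal (W x) * ENNReal.ofReal (W y)) := by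
    intro x y hx hxe hy hye hyx
    have px := norm_pos_iff.2 hx
    have py := norm_pos_iff.2 hy
    have pxe := norm_pos_iff.2 (sub_ne_zero.2 hxe)
    have pye := norm_pos_iff.2 (sub_ne_zero.2 hye)
    have pd := norm_pos_iff.2 (sub_ne_zero.2 (Ne.symm hyx))
    have tri : ∀ z : EuclideanSpace ℝ (Fin n), 1 ≤ ‖z‖ + ‖z - e‖ := fun z => by
      have := norm_sub_le z (z - e)
      rwa [sub_sub_cancel, hne] at this
    have hbb : |‖x - e‖ - ‖y - e‖| ≤ ‖x - y‖ := by
      have := abs_norm_sub_norm_le (x - e) (y - e)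
      rwa [sub_sub_sub_cancel_right] at this
    have := H ‖x‖ ‖y‖ ‖x - e‖ ‖y - e‖ ‖x - y‖ _ _ px py pxe pye pd
      (abs_norm_sub_norm_le x y) hbb (tri x) (tri y) (abs_nonneg _) (abs_nonneg _) (hu x y hx hy)
      (fun τ h0 h1 => pow_hol pxe pye hbb h0 h1 (by linarith))
    rw [← ENNReal.ofReal_add (hW0 x) (hW0 y),
      ← ENNReal.ofReal_mul (add_nonneg (hW0 x) (hW0 y)), ← ENNReal.ofReal_mul (hW0 x),
      ← ENNReal.ofReal_add (mul_nonneg (add_nonneg (hW0 x) (hW0 y)) (hK0 _))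
        (mul_nonneg (hW0 x) (hW0 y)), ← ENNReal.ofReal_mul hC]
    apply ENNReal.ofReal_le_ofReal
    rw [neg_sub] at this
    exact this
  have hne_ae : ∀ z : EuclideanSpace ℝ (Fin n),
      ∀ᵐ x : EuclideanSpace ℝ (Fin n), x ≠ z := fun z => by
    simp [ae_iff]
  have hfin := double_fin (volume : Measure (EuclideanSpace ℝ (Fin n)))
    (fun x => ENNReal.ofReal (W x)) (fun x => ENNReal.ofReal (K x))
    hWm.ennreal_ofReal hKm.ennreal_ofReal (fun x => by simp [hK])
    hWi.lintegral_lt_top hKi.lintegral_lt_top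
  refine lt_of_le_of_lt ?_ (ENNReal.mul_lt_top (ENNReal.ofReal_lt_top (r := C)) hfin)
  rw [← lintegral_const_mul' _ _ ENNReal.ofReal_ne_top]
  refine lintegral_mono_ae ?_
  filter_upwards [hne_ae 0, hne_ae e] with x hx hxe
  rw [← lintegral_const_mul' _ _ ENNReal.ofReal_ne_top]
  refine lintegral_mono_ae ?_
  filter_upwards [hne_ae 0, hne_ae e, hne_ae x] with y hy hye hyx
  exact hbound x y hx hxe hy hye hyx
end
end

section
/- Let $s \in (0,1)$, $p \in (1,\infty)$ with $sp < n$, and $\sigma > 0$ with $sp + \sigma < n$. Set $\gamma := \frac{sp-n+\sigma}{p-1} < 0$. Then the principal value integral $\mathrm{p.v.}\int_{\mathbb{R}^n} \frac{\big|1 - |z|^{\gamma}\big|^{p-2}\,(1 - |z|^{\gamma})}{|{\bf e}_1 - z|^{n+sp}}\,dz$ converges to a strictly positive real number. -/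
open MeasureTheory Filter

noncomputable section
set_option linter.unusedSectionVars false

variable {E : Type*} [NormedAddCommGroup E] [InnerProductSpace ℝ E] [FiniteDimensional ℝ E]
  [MeasurableSpace E] [BorelSpace E]

/-- Elementary inequality. -/
lemma aux_rpow_bound (a r : ℝ) (ha : 0 ≤ a) (hr : 0 < r) (hr1 : r < 1) :
    r ^ (-a) - 1 ≤ (1 + a) * r ^ (-a) * (1 - r) := by
  have h1 : 1 - r ^ a ≤ (1 + a) * (1 - r) := by
    have := one_add_mul_self_le_rpow_one_add (s := r - 1) (by linarith) (p := 1 + a) (by linarith)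
    have h2 : (1 + (r - 1)) ^ (1 + a) ≤ r ^ a := by
      rw [show 1 + (r - 1) = r by ring]
      exact Real.rpow_le_rpow_of_exponent_ge hr hr1.le (by linarith)
    nlinarith
  have h3 : r ^ (-a) * r ^ a = 1 := by rw [← Real.rpow_add hr]; simp
  have h4 : 0 < r ^ (-a) := Real.rpow_pos_of_pos hr _
  nlinarith [mul_le_mul_of_nonneg_left h1 h4.le]

lemma aux_det (z : E) :
    |(((1 / dist z 0) ^ 2 • ((ℝ ∙ (z - 0))ᗮ.reflection : E →L[ℝ] E)) : E →L[ℝ] E).det| =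
      ((1 / ‖z‖) ^ 2) ^ Module.finrank ℝ E := by
  have h : |((((ℝ ∙ (z - 0))ᗮ.reflection : E ≃ₗᵢ[ℝ] E) : E →L[ℝ] E)).det| = 1 := by
    rw [ContinuousLinearMap.det, ← LinearMap.normDet_eq_abs_det]
    exact ((ℝ ∙ (z - 0))ᗮ.reflection).toLinearIsometry.normDet_eq_one
  rw [ContinuousLinearMap.det] at h ⊢
  rw [ContinuousLinearMap.toLinearMap_smul, LinearMap.det_smul, abs_mul, h]
  simp

lemma aux_integrable_norm [Nontrivial E] (b R : ℝ) (hR : 0 < R) (hb : -(Module.finrank ℝ E : ℝ) < b) :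
    IntegrableOn (fun z : E => ‖z‖ ^ b) (Metric.ball 0 R) := by
  have h := (integrableOn_fun_norm_addHaar (volume : Measure E) (f := fun y : ℝ => y ^ b) (r := R))
  rw [h]
  have hd : 1 ≤ Module.finrank ℝ E := Module.finrank_pos
  have : IntegrableOn (fun y : ℝ => y ^ (b + (Module.finrank ℝ E : ℝ) - 1)) (Set.Ioo 0 R) := by
    rw [intervalIntegral.integrableOn_Ioo_rpow_iff hR]; linarith
  refine this.congr_fun (fun y hy => ?_) measurableSet_Ioo
  simp only [smul_eq_mul]
  rw [← Real.rpow_natCast, ← Real.rpow_add hy.1]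
  congr 1
  push_cast [hd]; ring

lemma aux_integrable_norm' [Nontrivial E] (e : E) (b R : ℝ) (hR : 0 < R) (hb : -(Module.finrank ℝ E : ℝ) < b) :
    IntegrableOn (fun z : E => ‖e - z‖ ^ b) (Metric.ball e R) := by
  have h := aux_integrable_norm (E := E) b R hR hb
  rw [← integrable_indicator_iff Metric.isOpen_ball.measurableSet] at h ⊢
  have := h.comp_sub_left e
  refine this.congr (Eventually.of_forall fun z => ?_)
  simp [Set.indicator, dist_eq_norm, norm_sub_rev]

lemma aux_vol [Nontrivial E] (e : E) (ε : ℝ) (h0 : 0 < ε) (h1 : ε < 1) :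
    volume.real (Metric.closedBall e ε \ Metric.ball e (ε * (1 - ε))) ≤
      (Module.finrank ℝ E * volume.real (Metric.ball (0:E) 1)) * ε ^ (Module.finrank ℝ E + 1) := by
  rw [measureReal_sdiff (Metric.ball_subset_closedBall.trans
    (Metric.closedBall_subset_closedBall (by nlinarith))) Metric.isOpen_ball.measurableSet measure_closedBall_lt_top.ne]
  rw [Measure.addHaar_real_closedBall _ _ h0.le, ← Measure.addHaar_real_closedBall_eq_addHaar_real_ball _ e,
    Measure.addHaar_real_closedBall _ _ (by nlinarith)]
  have := one_add_mul_sub_le_pow (a := 1 - ε) (by linarith) (Module.finrank ℝ E)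
  rw [mul_pow]
  have h3 : 0 ≤ ε ^ (Module.finrank ℝ E) * volume.real (Metric.ball (0:E) 1) := by positivity
  have h4 := mul_le_mul_of_nonneg_left this h3
  rw [pow_succ]
  linarith

lemma aux_pow_le (t x : ℝ) (h1 : 1 / 2 ≤ t) (h2 : t ≤ 2) : t ^ x ≤ 2 ^ |x| := by
  have ht : 0 < t := by linarith
  rw [Real.rpow_def_of_pos ht, Real.rpow_def_of_pos two_pos]
  apply Real.exp_le_exp.2
  have h3 : |Real.log t| ≤ Real.log 2 := by
    rw [abs_le]
    refine ⟨?_, Real.log_le_log ht h2⟩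
    have := Real.log_le_log (by norm_num) h1
    rw [one_div, Real.log_inv] at this
    exact this
  calc Real.log t * x ≤ |Real.log t * x| := le_abs_self _
    _ = |Real.log t| * |x| := abs_mul _ _
    _ ≤ _ := by gcongr

lemma aux_integrable_prod [Nontrivial E] (e : E) (he : ‖e‖ = 1) (b c : ℝ)
    (hb : -(Module.finrank ℝ E : ℝ) < b) (hc : -(Module.finrank ℝ E : ℝ) < c) :
    IntegrableOn (fun z : E => ‖z‖ ^ b * ‖e - z‖ ^ c) (Metric.ball 0 1) := by
  have i1 := aux_integrable_norm (E := E) b 1 one_pos hb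
  have i2 : IntegrableOn (fun z : E => ‖e - z‖ ^ c) (Metric.ball 0 1) := by
    refine (aux_integrable_norm' e c 2 two_pos hc).mono_set fun z hz => ?_
    rw [mem_ball_zero_iff] at hz
    rw [Metric.mem_ball, dist_eq_norm]
    have := norm_sub_le z e
    linarith
  refine Integrable.mono' ((i1.const_mul (2 ^ |c|)).add (i2.const_mul (2 ^ |b|))) ?_ ?_
  · exact Measurable.aestronglyMeasurable (by fun_prop)
  · refine (ae_restrict_iff' Metric.isOpen_ball.measurableSet).2 (Eventually.of_forall fun z hz => ?_)
    rw [mem_ball_zero_iff] at hz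
    have hb0 : 0 ≤ ‖z‖ ^ b := by positivity
    have hc0 : 0 ≤ ‖e - z‖ ^ c := by positivity
    rw [Real.norm_of_nonneg (by positivity)]
    simp only [Pi.add_apply]
    have h1 := norm_sub_le e z
    have h2 := norm_sub_norm_le e z
    rcases le_total ‖z‖ (1 / 2) with h | h
    · have := aux_pow_le ‖e - z‖ c (by linarith) (by linarith)
      have h5 : 0 ≤ (2:ℝ) ^ |b| * ‖e - z‖ ^ c := by positivity
      nlinarith [mul_le_mul_of_nonneg_left this hb0]
    · have := aux_pow_le ‖z‖ b (by linarith) (by linarith)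
      have h5 : 0 ≤ (2:ℝ) ^ |c| * ‖z‖ ^ b := by positivity
      nlinarith [mul_le_mul_of_nonneg_left this hc0]

/-- Scalar bound for the transformed integrand. -/
lemma aux_g_bound (N s p σ γ r D : ℝ) (hp : 1 < p) (hσ' : s * p + σ < N)
    (hγ : γ = (s * p - N + σ) / (p - 1)) (hr : 0 < r) (hr1 : r < 1) (hD : 1 - r ≤ D) :
    D * (r ^ (-σ) * (r ^ γ - 1) ^ (p - 1) / D ^ (N + s * p)) ≤
      (1 - γ) ^ (p - 1) * (r ^ (s * p - N) * D ^ (p - s * p - N)) := by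
  have hp1 : 0 < p - 1 := by linarith
  have hγ0 : γ < 0 := by rw [hγ]; exact div_neg_of_neg_of_pos (by linarith) hp1
  have hD0 : 0 < D := by linarith
  have h1 := aux_rpow_bound (-γ) r (by linarith) hr hr1
  rw [neg_neg] at h1
  have hrγ : 1 ≤ r ^ γ := Real.one_le_rpow_of_pos_of_le_one_of_nonpos hr hr1.le hγ0.le
  have h2 : r ^ γ - 1 ≤ (1 - γ) * (r ^ γ * D) := by
    have : (1 + -γ) * r ^ γ * (1 - r) ≤ (1 + -γ) * r ^ γ * D := by
      apply mul_le_mul_of_nonneg_left hD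
      apply mul_nonneg <;> linarith
    linarith
  have h3 : (r ^ γ - 1) ^ (p - 1) ≤ ((1 - γ) * (r ^ γ * D)) ^ (p - 1) :=
    Real.rpow_le_rpow (by linarith) h2 hp1.le
  rw [Real.mul_rpow (by linarith) (by positivity), Real.mul_rpow (by positivity) hD0.le,
    ← Real.rpow_mul hr.le] at h3
  have h4 : γ * (p - 1) = s * p - N + σ := by rw [hγ]; field_simp
  rw [h4] at h3
  have e1 : r ^ (s * p - N) = r ^ (-σ) * r ^ (s * p - N + σ) := by
    rw [← Real.rpow_add hr]; congr 1; ring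
  have e2 : D ^ (p - s * p - N) = D * D ^ (p - 1) / D ^ (N + s * p) := by
    rw [← Real.rpow_one_add' hD0.le (by linarith), ← Real.rpow_sub hD0]; congr 1; ring
  rw [e1, e2]
  calc D * (r ^ (-σ) * (r ^ γ - 1) ^ (p - 1) / D ^ (N + s * p))
      ≤ D * (r ^ (-σ) * ((1 - γ) ^ (p - 1) * (r ^ (s * p - N + σ) * D ^ (p - 1))) / D ^ (N + s * p)) := by
        gcongr
    _ = _ := by ring

/-- Inversion identity for the scalar part. -/
lemma aux_inv (N : ℕ) (s p σ γ r D : ℝ) (hp : 1 < p) (hσ' : s * p + σ < N)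
    (hγ : γ = (s * p - N + σ) / (p - 1)) (hr : 0 < r) (hr1 : r < 1) (hD : 0 < D) :
    ((1 / r) ^ 2) ^ N * ((|1 - (1 / r) ^ γ| ^ (p - 2) * (1 - (1 / r) ^ γ)) / (D / r) ^ (N + s * p)) =
      r ^ (-σ) * (r ^ γ - 1) ^ (p - 1) / D ^ (N + s * p) := by
  have hp1 : 0 < p - 1 := by linarith
  have hγ0 : γ < 0 := by rw [hγ]; exact div_neg_of_neg_of_pos (by linarith) hp1
  have hrγ : 1 < r ^ γ := Real.one_lt_rpow_of_pos_of_lt_one_of_neg hr hr1 hγ0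
  have e1 : 1 - (1 / r) ^ γ = r ^ (-γ) * (r ^ γ - 1) := by
    rw [mul_sub, ← Real.rpow_add hr, one_div, Real.inv_rpow hr.le, Real.rpow_neg hr.le]; simp
  have e0 : 0 < r ^ (-γ) * (r ^ γ - 1) := mul_pos (by positivity) (by linarith)
  rw [e1, abs_of_pos e0, ← Real.rpow_add_one e0.ne', show p - 2 + 1 = p - 1 by ring,
    Real.mul_rpow (by positivity) (by linarith), ← Real.rpow_mul hr.le,
    Real.div_rpow hD.le hr.le]
  have e2 : r ^ (-σ) = ((1 / r) ^ 2) ^ N * r ^ (-γ * (p - 1)) * r ^ (N + s * p) := by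
    have h4 : γ * (p - 1) = s * p - N + σ := by rw [hγ]; field_simp
    have : ((1 / r) ^ 2) ^ N = r ^ (-(2 * N : ℝ)) := by
      rw [Real.rpow_neg hr.le, one_div, inv_pow, inv_pow, ← pow_mul, ← Real.rpow_natCast]
      push_cast; rfl
    rw [this, ← Real.rpow_add hr, ← Real.rpow_add hr, neg_mul, h4]
    congr 1; ring
  rw [e2]
  field_simp

lemma aux_f (p γ σ r Q : ℝ) (hp : 1 < p) (hγ0 : γ < 0) (hr : 0 < r) (hr1 : r < 1) :
    (|1 - r ^ γ| ^ (p - 2) * (1 - r ^ γ)) / Q =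
      - r ^ σ * (r ^ (-σ) * (r ^ γ - 1) ^ (p - 1) / Q) := by
  have hrγ : 1 < r ^ γ := Real.one_lt_rpow_of_pos_of_lt_one_of_neg hr hr1 hγ0
  have : r ^ σ * r ^ (-σ) = 1 := by rw [← Real.rpow_add hr]; simp
  rw [abs_sub_comm, abs_of_pos (by linarith), show p - 1 = p - 2 + 1 by ring,
    Real.rpow_add_one (by linarith)]
  linear_combination ((r ^ γ - 1) ^ (p - 2) * (r ^ γ - 1) / Q) * this

lemma aux_inv_norm (e : E) (he : ‖e‖ = 1) (z : E) (hz : z ≠ 0) :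
    ‖EuclideanGeometry.inversion (0 : E) 1 z‖ = 1 / ‖z‖ ∧
      ‖e - EuclideanGeometry.inversion (0 : E) 1 z‖ = ‖e - z‖ / ‖z‖ := by
  have h1 := EuclideanGeometry.dist_inversion_center (0 : E) z 1
  rw [dist_zero_right, dist_zero_right] at h1
  have he0 : e ≠ 0 := by intro h; simp [h] at he
  have h2 := EuclideanGeometry.dist_inversion_inversion he0 hz 1
  rw [EuclideanGeometry.inversion_of_mem_sphere (by simp [he])] at h2
  simp only [dist_eq_norm, sub_zero, he] at h2
  refine ⟨by rw [h1]; simp, ?_⟩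
  rw [h2]; ring

lemma aux_image (e : E) (he : ‖e‖ = 1) (ε : ℝ) :
    EuclideanGeometry.inversion (0 : E) 1 '' ((Metric.ball (0 : E) 1 \ {0}) ∩ {z | ε * ‖z‖ < ‖e - z‖}) =
      {z | 1 < ‖z‖ ∧ ε < ‖e - z‖} := by
  have hinv := EuclideanGeometry.inversion_involutive (0 : E) (R := 1) one_ne_zero
  ext w
  constructor
  · rintro ⟨z, ⟨⟨h1, h2⟩, h3⟩, rfl⟩
    have hz0 : z ≠ 0 := by simpa using h2
    have hz : 0 < ‖z‖ := norm_pos_iff.2 hz0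
    obtain ⟨h5, h6⟩ := aux_inv_norm e he z hz0
    simp only [Set.mem_ofPred_eq, h5, h6]
    rw [mem_ball_zero_iff] at h1
    exact ⟨by rw [lt_div_iff₀ hz]; linarith, by rw [lt_div_iff₀ hz]; exact h3⟩
  · rintro ⟨h1, h2⟩
    have hw : 0 < ‖w‖ := by linarith
    obtain ⟨h5, h6⟩ := aux_inv_norm e he w (norm_pos_iff.1 hw)
    refine ⟨EuclideanGeometry.inversion (0 : E) 1 w, ⟨⟨?_, ?_⟩, ?_⟩, hinv w⟩
    · rw [mem_ball_zero_iff, h5, div_lt_one hw]; exact h1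
    · intro h
      rw [Set.mem_singleton_iff] at h
      rw [h, norm_zero] at h5
      have : 0 < 1 / ‖w‖ := by positivity
      linarith
    · rw [Set.mem_ofPred_eq, h5, h6, mul_one_div]
      gcongr

theorem main_aux [Nontrivial E] (e : E) (he : ‖e‖ = 1) (s p σ : ℝ) (hs : s ∈ Set.Ioo (0 : ℝ) 1)
    (hp : 1 < p) (hσ : 0 < σ) (hσ' : s * p + σ < Module.finrank ℝ E)
    (γ : ℝ) (hγ : γ = (s * p - Module.finrank ℝ E + σ) / (p - 1)) :
    ∃ L : ℝ, 0 < L ∧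
      Tendsto (fun ε : ℝ =>
          ∫ z in {z : E | ε < ‖e - z‖},
            (|1 - ‖z‖ ^ γ| ^ (p - 2) * (1 - ‖z‖ ^ γ)) /
              ‖e - z‖ ^ ((Module.finrank ℝ E : ℝ) + s * p))
        (nhdsWithin 0 (Set.Ioi 0)) (nhds L) := by
  obtain ⟨hs0, hs1⟩ := hs
  have hp1 : 0 < p - 1 := by linarith
  have hsp : 0 < s * p := by positivity
  have hsp' : s * p < p := by nlinarith
  have hγ0 : γ < 0 := by rw [hγ]; exact div_neg_of_neg_of_pos (by linarith) hp1
  set N := Module.finrank ℝ E with hN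
  set F : E → ℝ := fun z => (|1 - ‖z‖ ^ γ| ^ (p - 2) * (1 - ‖z‖ ^ γ)) / ‖e - z‖ ^ ((N : ℝ) + s * p)
    with hF
  set G : E → ℝ := fun z => ‖z‖ ^ (-σ) * (‖z‖ ^ γ - 1) ^ (p - 1) / ‖e - z‖ ^ ((N : ℝ) + s * p) with hG
  set K : E → ℝ := fun z => ‖z‖ ^ (s * p - N) * ‖e - z‖ ^ (p - s * p - N) with hK
  set C : ℝ := (1 - γ) ^ (p - 1) with hC
  have hC0 : 0 < C := Real.rpow_pos_of_pos (by linarith) _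
  set A : Set E := Metric.ball (0 : E) 1 \ {0} with hA
  have mA : MeasurableSet A := Metric.isOpen_ball.measurableSet.diff (measurableSet_singleton _)
  have hAr : ∀ z ∈ A, 0 < ‖z‖ ∧ ‖z‖ < 1 ∧ 1 - ‖z‖ ≤ ‖e - z‖ ∧ 0 < ‖e - z‖ := by
    intro z hz
    have h1 : ‖z‖ < 1 := by simpa using hz.1
    have h2 : 0 < ‖z‖ := norm_pos_iff.2 (by simpa using hz.2)
    have h3 := norm_sub_norm_le e z
    exact ⟨h2, h1, by linarith, by linarith⟩
  have mF : Measurable F := by fun_prop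
  have mG : Measurable G := by fun_prop
  have hFG : ∀ z ∈ A, F z = - ‖z‖ ^ σ * G z := fun z hz =>
    aux_f p γ σ ‖z‖ _ hp hγ0 (hAr z hz).1 (hAr z hz).2.1
  have hG0 : ∀ z ∈ A, 0 < G z := by
    intro z hz
    obtain ⟨h1, h2, h3, h4⟩ := hAr z hz
    have hrγ : 1 < ‖z‖ ^ γ := Real.one_lt_rpow_of_pos_of_lt_one_of_neg h1 h2 hγ0
    have : 0 < (‖z‖ ^ γ - 1) ^ (p - 1) := Real.rpow_pos_of_pos (by linarith) _
    simp only [hG]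
    positivity
  have hDG : ∀ z ∈ A, ‖e - z‖ * G z ≤ C * K z := by
    intro z hz
    obtain ⟨h1, h2, h3, h4⟩ := hAr z hz
    exact aux_g_bound N s p σ γ ‖z‖ ‖e - z‖ hp hσ' hγ h1 h2 h3
  have iK : IntegrableOn K A :=
    (aux_integrable_prod e he _ _ (by rw [← hN]; linarith) (by rw [← hN]; linarith)).mono_set Set.sdiff_subset
  set A' : ℝ → Set E := fun ε => A ∩ {z | ε < ‖e - z‖} with hA'
  set B : ℝ → Set E := fun ε => A ∩ {z | ε * ‖z‖ < ‖e - z‖} with hB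
  set T : ℝ → Set E := fun ε => {z | 1 < ‖z‖ ∧ ε < ‖e - z‖} with hT
  have mA' : ∀ ε, MeasurableSet (A' ε) := fun ε =>
    mA.inter (measurableSet_lt (by fun_prop) (by fun_prop))
  have mB : ∀ ε, MeasurableSet (B ε) := fun ε =>
    mA.inter (measurableSet_lt (by fun_prop) (by fun_prop))
  have mT : ∀ ε, MeasurableSet (T ε) := fun ε =>
    ((measurableSet_lt (f := fun _ : E => (1 : ℝ)) (g := fun z : E => ‖z‖) (by fun_prop) (by fun_prop)).inter
      (measurableSet_lt (f := fun _ : E => ε) (g := fun z : E => ‖e - z‖) (by fun_prop) (by fun_prop)) :)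
  have hsub : ∀ ε, 0 < ε → A' ε ⊆ B ε := by
    rintro ε hε z ⟨hz, hz'⟩
    refine ⟨hz, ?_⟩
    have := (hAr z hz).2.1
    simp only [Set.mem_ofPred_eq] at hz' ⊢
    nlinarith
  have iG : ∀ ε, 0 < ε → IntegrableOn G (B ε) := by
    intro ε hε
    refine Integrable.mono' ((iK.mono_set (Set.inter_subset_left)).const_mul ((1 + ε) / ε * C))
      mG.aestronglyMeasurable ?_
    refine (ae_restrict_iff' (mB ε)).2 (Eventually.of_forall fun z hz => ?_)
    obtain ⟨h1, h2, h3, h4⟩ := hAr z hz.1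
    have h5 : ε * ‖z‖ < ‖e - z‖ := hz.2
    have h6 := hDG z hz.1
    have h7 := hG0 z hz.1
    rw [Real.norm_of_nonneg h7.le]
    have h8 : ε ≤ (1 + ε) * ‖e - z‖ := by nlinarith
    rw [mul_assoc, div_mul_eq_mul_div, le_div_iff₀ hε]
    nlinarith
  have iF : ∀ ε, 0 < ε → IntegrableOn F (A' ε) := by
    intro ε hε
    refine Integrable.mono' ((iG ε hε).mono_set (hsub ε hε)) mF.aestronglyMeasurable ?_
    refine (ae_restrict_iff' (mA' ε)).2 (Eventually.of_forall fun z hz => ?_)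
    obtain ⟨h1, h2, h3, h4⟩ := hAr z hz.1
    have h7 := hG0 z hz.1
    have h8 : ‖z‖ ^ σ ≤ 1 := Real.rpow_le_one h1.le h2.le hσ.le
    have h9 : 0 ≤ ‖z‖ ^ σ := by positivity
    rw [hFG z hz.1, norm_mul, norm_neg, Real.norm_of_nonneg h9, Real.norm_of_nonneg h7.le]
    nlinarith
  -- change of variables
  have hder : ∀ ε, ∀ z ∈ B ε, HasFDerivWithinAt (EuclideanGeometry.inversion (0 : E) 1)
      ((1 / dist z 0) ^ 2 • ((ℝ ∙ (z - 0))ᗮ.reflection : E →L[ℝ] E)) (B ε) z := fun ε z hz =>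
    (EuclideanGeometry.hasFDerivAt_inversion (by simpa using hz.1.2)).hasFDerivWithinAt
  have hinj : ∀ ε, Set.InjOn (EuclideanGeometry.inversion (0 : E) 1) (B ε) := fun ε =>
    (EuclideanGeometry.inversion_injective (0 : E) one_ne_zero).injOn
  have himg : ∀ ε, EuclideanGeometry.inversion (0 : E) 1 '' (B ε) = T ε := aux_image e he
  have hint : ∀ ε, Set.EqOn (fun z => |((1 / dist z 0) ^ 2 • ((ℝ ∙ (z - 0))ᗮ.reflection : E →L[ℝ] E)).det| •
      F (EuclideanGeometry.inversion (0 : E) 1 z)) G (B ε) := by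
    intro ε z hz
    obtain ⟨h1, h2, h3, h4⟩ := hAr z hz.1
    obtain ⟨h5, h6⟩ := aux_inv_norm e he z (norm_pos_iff.1 h1)
    have := aux_inv N s p σ γ ‖z‖ ‖e - z‖ hp hσ' hγ h1 h2 h4
    simp only [smul_eq_mul, hF, hG]
    rw [aux_det, h5, h6]
    exact this
  have hcov : ∀ ε, ∫ z in T ε, F z = ∫ z in B ε, G z := by
    intro ε
    rw [← himg, integral_image_eq_integral_abs_det_fderiv_smul volume (mB ε) (hder ε) (hinj ε)]
    exact setIntegral_congr_fun (mB ε) (hint ε)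
  have iT : ∀ ε, 0 < ε → IntegrableOn F (T ε) := by
    intro ε hε
    rw [← himg, integrableOn_image_iff_integrableOn_abs_det_fderiv_smul volume (mB ε) (hder ε) (hinj ε)]
    exact (iG ε hε).congr_fun (hint ε).symm (mB ε)
  -- decomposition
  have hdec : ∀ ε, 0 < ε → ∫ z in {z : E | ε < ‖e - z‖}, F z =
      (∫ z in A' ε, (1 - ‖z‖ ^ σ) * G z) + ∫ z in B ε \ A' ε, G z := by
    intro ε hε
    have hae : ({z : E | ε < ‖e - z‖} : Set E) =ᵐ[volume] (A' ε ∪ T ε : Set E) := by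
      have hnull : volume (({0} : Set E) ∪ Metric.sphere 0 1) = 0 := by
        rw [measure_union_null_iff]
        exact ⟨measure_singleton _, Measure.addHaar_sphere _ _ _⟩
      refine Filter.eventuallyEq_set.2 ?_
      filter_upwards [measure_eq_zero_iff_ae_notMem.1 hnull] with z hz
      simp only [Set.mem_union, Set.mem_singleton_iff, mem_sphere_zero_iff_norm, not_or] at hz
      simp only [hA', hT, hA, Set.mem_union, Set.mem_inter_iff, Set.mem_sdiff, mem_ball_zero_iff,
        Set.mem_singleton_iff, Set.mem_ofPred_eq]
      rcases lt_or_gt_of_ne hz.2 with h | h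
      · have := h.not_gt
        tauto
      · tauto
    have hdisj : Disjoint (A' ε) (T ε) := by
      rw [Set.disjoint_left]
      intro z hz hz'
      exact absurd (hAr z hz.1).2.1 (not_lt.2 hz'.1.le)
    rw [setIntegral_congr_set hae, setIntegral_union hdisj (mT ε) (iF ε hε) (iT ε hε), hcov]
    have h1 : ∫ z in B ε, G z = (∫ z in A' ε, G z) + ∫ z in B ε \ A' ε, G z := by
      rw [← setIntegral_union Set.disjoint_sdiff_right ((mB ε).diff (mA' ε))
        ((iG ε hε).mono_set (hsub ε hε)) ((iG ε hε).mono_set Set.sdiff_subset),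
        Set.union_sdiff_cancel (hsub ε hε)]
    rw [h1, ← add_assoc, ← integral_add (iF ε hε) ((iG ε hε).mono_set (hsub ε hε))]
    congr 1
    refine setIntegral_congr_fun (mA' ε) fun z hz => ?_
    have h2 := hFG z hz.1
    linear_combination h2
  -- the limit integrand
  have hHpos : ∀ z ∈ A, 0 < (1 - ‖z‖ ^ σ) * G z := by
    intro z hz
    obtain ⟨h1, h2, h3, h4⟩ := hAr z hz
    have := Real.rpow_lt_one h1.le h2 hσ
    exact mul_pos (by linarith) (hG0 z hz)
  have hHle : ∀ z ∈ A, (1 - ‖z‖ ^ σ) * G z ≤ (1 + σ) * C * K z := by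
    intro z hz
    obtain ⟨h1, h2, h3, h4⟩ := hAr z hz
    have h5 := aux_rpow_bound σ ‖z‖ hσ.le h1 h2
    have h6 : 1 - ‖z‖ ^ σ ≤ (1 + σ) * (1 - ‖z‖) := by
      have h7 : ‖z‖ ^ (-σ) * ‖z‖ ^ σ = 1 := by rw [← Real.rpow_add h1]; simp
      have h8 : 0 < ‖z‖ ^ σ := Real.rpow_pos_of_pos h1 _
      have := mul_le_mul_of_nonneg_right h5 h8.le
      linear_combination this + (-1 + (1 + σ) * (1 - ‖z‖)) * h7
    have h7 := hG0 z hz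
    calc (1 - ‖z‖ ^ σ) * G z ≤ ((1 + σ) * ‖e - z‖) * G z := by
          gcongr
          exact h6.trans (by gcongr)
      _ = (1 + σ) * (‖e - z‖ * G z) := by ring
      _ ≤ (1 + σ) * (C * K z) := mul_le_mul_of_nonneg_left (hDG z hz) (by linarith)
      _ = _ := by ring
  have mH : Measurable (fun z : E => (1 - ‖z‖ ^ σ) * G z) := by fun_prop
  have iH : IntegrableOn (fun z : E => (1 - ‖z‖ ^ σ) * G z) A := by
    refine Integrable.mono' (iK.const_mul ((1 + σ) * C)) mH.aestronglyMeasurable ?_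
    refine (ae_restrict_iff' mA).2 (Eventually.of_forall fun z hz => ?_)
    rw [Real.norm_of_nonneg (hHpos z hz).le]
    exact hHle z hz
  refine ⟨∫ z in A, (1 - ‖z‖ ^ σ) * G z, ?_, ?_⟩
  · rw [setIntegral_pos_iff_support_of_nonneg_ae ?_ iH]
    · have hAo : IsOpen A := Metric.isOpen_ball.sdiff isClosed_singleton
      have hAne : A.Nonempty := by
        refine ⟨(1 / 2 : ℝ) • e, ?_, ?_⟩
        · simp [norm_smul, he]; norm_num
        · have : e ≠ 0 := by intro h; simp [h] at he
          simp [this]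
      refine (hAo.measure_pos volume hAne).trans_le (measure_mono fun z hz => ⟨(hHpos z hz).ne', hz⟩)
    · exact (ae_restrict_iff' mA).2 (Eventually.of_forall fun z hz => (hHpos z hz).le)
  have hlim1 : Tendsto (fun ε : ℝ => ∫ z in A' ε, (1 - ‖z‖ ^ σ) * G z) (nhdsWithin 0 (Set.Ioi 0))
      (nhds (∫ z in A, (1 - ‖z‖ ^ σ) * G z)) := by
    have heq : ∀ ε, ∫ z in A' ε, (1 - ‖z‖ ^ σ) * G z =
        ∫ z in A, ({z | ε < ‖e - z‖} : Set E).indicator (fun z => (1 - ‖z‖ ^ σ) * G z) z := by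
      intro ε
      rw [setIntegral_indicator (measurableSet_lt (by fun_prop) (by fun_prop))]
    simp_rw [heq]
    refine tendsto_integral_filter_of_dominated_convergence (fun z => ‖(1 - ‖z‖ ^ σ) * G z‖) ?_ ?_ iH.norm ?_
    · exact Eventually.of_forall fun ε =>
        (mH.indicator (measurableSet_lt (by fun_prop) (by fun_prop))).aestronglyMeasurable
    · exact Eventually.of_forall fun ε => Eventually.of_forall fun z => norm_indicator_le_norm_self _ _
    · refine (ae_restrict_iff' mA).2 (Eventually.of_forall fun z hz => ?_)
      refine tendsto_const_nhds.congr' ?_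
      have h4 := (hAr z hz).2.2.2
      filter_upwards [nhdsWithin_le_nhds (Iio_mem_nhds h4)] with ε hε
      rw [Set.indicator_of_mem]
      exact hε
  set M : ℝ := C * 2 ^ |s * p - N| * 2 ^ |p - s * p - N - 1| *
    (N * volume.real (Metric.ball (0:E) 1)) with hM
  have hlim2 : Tendsto (fun ε : ℝ => ∫ z in B ε \ A' ε, G z) (nhdsWithin 0 (Set.Ioi 0)) (nhds 0) := by
    have hb : Tendsto (fun ε : ℝ => M * ε ^ (p - s * p)) (nhdsWithin 0 (Set.Ioi 0)) (nhds 0) := by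
      have h1 : Tendsto (fun ε : ℝ => M * ε ^ (p - s * p)) (nhds 0) (nhds (M * 0 ^ (p - s * p))) :=
        ((Real.continuousAt_rpow_const 0 (p - s * p) (Or.inr (by linarith))).tendsto).const_mul M
      rw [Real.zero_rpow (by linarith), mul_zero] at h1
      exact h1.mono_left nhdsWithin_le_nhds
    refine squeeze_zero_norm' ?_ hb
    filter_upwards [self_mem_nhdsWithin, nhdsWithin_le_nhds (Iio_mem_nhds (show (0:ℝ) < 1 / 2 by norm_num))]
      with ε hε hε2
    have hε0 : 0 < ε := hε
    have hε1 : ε < 1 / 2 := hε2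
    have hss : B ε \ A' ε ⊆ Metric.closedBall e ε \ Metric.ball e (ε * (1 - ε)) := by
      intro z hz
      obtain ⟨h1, h2, h3, h4⟩ := hAr z hz.1.1
      have h5 : ε * ‖z‖ < ‖e - z‖ := hz.1.2
      have h6 : ‖e - z‖ ≤ ε := not_lt.1 fun h => hz.2 ⟨hz.1.1, h⟩
      refine ⟨by rwa [Metric.mem_closedBall, dist_eq_norm, norm_sub_rev], ?_⟩
      rw [Metric.mem_ball, dist_eq_norm, norm_sub_rev, not_lt]
      nlinarith
    have hfin : volume (Metric.closedBall e ε \ Metric.ball e (ε * (1 - ε))) < ⊤ :=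
      (measure_mono Set.sdiff_subset).trans_lt measure_closedBall_lt_top
    have hbd : ∀ z ∈ B ε \ A' ε, ‖G z‖ ≤
        C * 2 ^ |s * p - N| * 2 ^ |p - s * p - N - 1| * ε ^ (p - s * p - N - 1) := by
      intro z hz
      obtain ⟨h1, h2, h3, h4⟩ := hAr z hz.1.1
      have h5 : ε * ‖z‖ < ‖e - z‖ := hz.1.2
      have h6 : ‖e - z‖ ≤ ε := not_lt.1 fun h => hz.2 ⟨hz.1.1, h⟩
      rw [Real.norm_of_nonneg (hG0 z hz.1.1).le]
      have h7 := hDG z hz.1.1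
      have h8 : G z ≤ C * (‖z‖ ^ (s * p - N) * ‖e - z‖ ^ (p - s * p - N - 1)) := by
        rw [Real.rpow_sub_one h4.ne', ← mul_div_assoc, ← mul_div_assoc, le_div_iff₀ h4]
        linarith
      have h9 := aux_pow_le ‖z‖ (s * p - N) (by linarith) (by linarith)
      have h10 := aux_pow_le (‖e - z‖ / ε) (p - s * p - N - 1)
        (by rw [le_div_iff₀ hε0]; nlinarith) (by rw [div_le_iff₀ hε0]; linarith)
      rw [Real.div_rpow h4.le hε0.le, div_le_iff₀ (by positivity)] at h10
      calc G z ≤ _ := h8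
        _ ≤ C * (2 ^ |s * p - N| * (2 ^ |p - s * p - N - 1| * ε ^ (p - s * p - N - 1))) := by gcongr
        _ = _ := by ring
    have h1 := norm_setIntegral_le_of_norm_le_const ((measure_mono hss).trans_lt hfin) hbd
    have h2 : volume.real (B ε \ A' ε) ≤ (N * volume.real (Metric.ball (0:E) 1)) * ε ^ (N + 1) :=
      (measureReal_mono hss hfin.ne).trans (aux_vol e ε hε0 (by linarith))
    have h3 : ε ^ (p - s * p) = ε ^ (p - s * p - N - 1) * ε ^ (N + 1) := by
      rw [← Real.rpow_natCast, ← Real.rpow_add hε0]; push_cast; congr 1; ring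
    calc _ ≤ _ := h1
      _ ≤ _ := mul_le_mul_of_nonneg_left h2 (by positivity)
      _ = M * ε ^ (p - s * p) := by rw [h3, hM]; ring
  have := hlim1.add hlim2
  rw [add_zero] at this
  refine this.congr' ?_
  filter_upwards [self_mem_nhdsWithin] with ε hε
  exact (hdec ε hε).symm

theorem stmt_16 (n : ℕ) (hn : 0 < n) (s p σ : ℝ) (hs : s ∈ Set.Ioo (0 : ℝ) 1)
    (hp : 1 < p) (hspn : s * p < n) (hσ : 0 < σ) (hσ' : s * p + σ < n)
    (γ : ℝ) (hγ : γ = (s * p - n + σ) / (p - 1)) :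
    ∃ L : ℝ, 0 < L ∧
      Tendsto (fun ε : ℝ =>
          ∫ z in {z : EuclideanSpace ℝ (Fin n) |
              ε < ‖EuclideanSpace.single (⟨0, hn⟩ : Fin n) (1 : ℝ) - z‖},
            (|1 - ‖z‖ ^ γ| ^ (p - 2) * (1 - ‖z‖ ^ γ)) /
              ‖EuclideanSpace.single (⟨0, hn⟩ : Fin n) (1 : ℝ) - z‖ ^ ((n : ℝ) + s * p))
        (nhdsWithin 0 (Set.Ioi 0)) (nhds L) := by
  have he : ‖EuclideanSpace.single (⟨0, hn⟩ : Fin n) (1 : ℝ)‖ = 1 := by simp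
  have : Nontrivial (EuclideanSpace ℝ (Fin n)) :=
    ⟨⟨EuclideanSpace.single (⟨0, hn⟩ : Fin n) (1 : ℝ), 0, by intro h; rw [h] at he; simp at he⟩⟩
  have hf : Module.finrank ℝ (EuclideanSpace ℝ (Fin n)) = n := finrank_euclideanSpace_fin
  have := main_aux (EuclideanSpace.single (⟨0, hn⟩ : Fin n) (1 : ℝ)) he s p σ hs hp hσ
    (by rw [hf]; exact hσ') γ (by rw [hf]; exact hγ)
  rw [hf] at this
  exact this
end
end
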